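/- arXiv:2106.08509 — 2 statements merged into one kernel-verified Lean document; each statement's English description precedes it below -/
import Mathlib

section
/- Let m ≥ 1. Let v and ω be axially symmetric functions on the closure of D_m, smooth in the interior of D_m, such that: (i) ∂_r² v + (1/r) ∂_r v + ∂_{x₃}² v − v/r² = ∂_{x₃} ω in D_m; (ii) ω is continuous up to the boundary with ω = 0 on ∂D_m; (iii) v, ∂_r v and ∂_{x₃} v extend continuously to the closure of each rectangle S_j away from the corner points, with ∂_{x₃} v = 0 on ∂^H D_m and v = 0 on ∂^V D_m; (iv) the functions g(c) = ∫_{D_m ∩ {r = c}} v(c, x₃) dx₃ and its derivative g′ are continuous in c on [2^{-m}, 1]. Then ∫_{D_m ∩ {r = c}} v(c, x₃) dx₃ = 0 for every c ∈ (2^{-m}, 1). -/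
noncomputable section

open Real MeasureTheory Set

/-- Inner radius of the `j`-th rectangle: `r_j = 2^(-j)`. -/
def rW (j : ℕ) : ℝ := (2 : ℝ) ^ (-(j : ℝ))

/-- Height of the `j`-th rectangle: `h_j = 2^(-β (j-1))`. -/
def hH (β : ℝ) (j : ℕ) : ℝ := (2 : ℝ) ^ (-β * ((j : ℝ) - 1))

/-- The rectangle `S_j` in the `(r, x₃)` cross-section. -/
def Srect (β : ℝ) (j : ℕ) : Set (ℝ × ℝ) :=
  {p : ℝ × ℝ | rW j ≤ p.1 ∧ p.1 < rW (j - 1) ∧ 0 < p.2 ∧ p.2 < hH β j}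

/-- The `(r, x₃)` cross-section of the domain `D_m`. -/
def Ddom (β : ℝ) (m : ℕ) : Set (ℝ × ℝ) := ⋃ j ∈ Finset.Icc 1 m, Srect β j

/-- The horizontal part `∂^H D_m` of the boundary of `D_m` (where `x₃` is locally constant). -/
def bdH (β : ℝ) (m : ℕ) : Set (ℝ × ℝ) :=
  {p : ℝ × ℝ | p.2 = 0 ∧ rW m ≤ p.1 ∧ p.1 ≤ 1} ∪
    ⋃ j ∈ Finset.Icc 1 m,
      {p : ℝ × ℝ | p.2 = hH β j ∧ rW j ≤ p.1 ∧ p.1 ≤ rW (j - 1)}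

/-- The vertical part `∂^V D_m` of the boundary of `D_m` (where `r` is locally constant). -/
def bdV (β : ℝ) (m : ℕ) : Set (ℝ × ℝ) :=
  {p : ℝ × ℝ | p.1 = 1 ∧ 0 ≤ p.2 ∧ p.2 ≤ 1} ∪
    {p : ℝ × ℝ | p.1 = rW m ∧ 0 ≤ p.2 ∧ p.2 ≤ hH β m} ∪
    ⋃ j ∈ Finset.Icc 1 (m - 1),
      {p : ℝ × ℝ | p.1 = rW j ∧ hH β (j + 1) ≤ p.2 ∧ p.2 ≤ hH β j}

/-- The full boundary `∂ D_m` of `D_m`. -/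
def bdD (β : ℝ) (m : ℕ) : Set (ℝ × ℝ) := bdH β m ∪ bdV β m

/-- The corner points of the polygonal cross-section of `D_m`
(i.e. the corner circles of the 3D domain). -/
def cornerSet (β : ℝ) (m : ℕ) : Set (ℝ × ℝ) :=
  ({(rW m, 0), ((1 : ℝ), 0), ((1 : ℝ), (1 : ℝ)), (rW m, hH β m)} : Set (ℝ × ℝ)) ∪
    ⋃ j ∈ Finset.Icc 1 (m - 1),
      ({(rW j, hH β j), (rW j, hH β (j + 1))} : Set (ℝ × ℝ))

/-- Radial partial derivative `∂_r`. -/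
def pdr (F : ℝ × ℝ → ℝ) (p : ℝ × ℝ) : ℝ := deriv (fun r => F (r, p.2)) p.1

/-- Vertical partial derivative `∂_{x₃}`. -/
def pdz (F : ℝ × ℝ → ℝ) (p : ℝ × ℝ) : ℝ := deriv (fun z => F (p.1, z)) p.2

/-- The axially symmetric Laplacian `Δ = ∂_r² + (1/r) ∂_r + ∂_{x₃}²`. -/
def cylLap (F : ℝ × ℝ → ℝ) (p : ℝ × ℝ) : ℝ :=
  pdr (pdr F) p + (1 / p.1) * pdr F p + pdz (pdz F) p

/-- The integral of an axially symmetric function over the 3-dimensional domain `D_m`,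
computed in the cross-section: `∫_{D_m} f dx = 2π ∬ F r dr dx₃`. -/
def cylIntegral (β : ℝ) (m : ℕ) (F : ℝ × ℝ → ℝ) : ℝ :=
  ∫ p in Ddom β m, F p * (2 * π * p.1)

/-- The vertical cross-section segment `D_m ∩ {r = c}` of the cross-section. -/
def vertSeg (β : ℝ) (m : ℕ) (c : ℝ) : Set ℝ := {z : ℝ | (c, z) ∈ Ddom β m}
/-!
Integrating the equation over a vertical segment of the strip `2^{-j} < r < 2^{-(j-1)}` gives
`g'' + g'/r - g/r² = 0`, because the flux `ω - ∂_{x₃} v` vanishes on the horizontal boundary.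
The flux is only continuous up to that boundary, so the integration is carried out over slightly
shorter segments, whose integrals are approximate solutions converging to `g`. Hence
`g(r) = A r + B/r` on each strip. The coefficients `A` and `B` are continuous expressions in
`r`, `g` and `g'`, so, being locally constant off the finitely many radii `2^{-j}`, they are
constant throughout. The vanishing of `g` at `r = 2^{-m}` and at `r = 1` then forces `A = B = 0`.
-/

open Filter Topology

section RadialOperator

variable {f : ℝ → ℝ} {x : ℝ}

/-- The radial part `f'' + f'/x - f/x²` of the operator `Δ - 1/r²`; its kernel on `(0, ∞)` is
spanned by `x` and `1/x`. -/
def radialOp (f : ℝ → ℝ) (x : ℝ) : ℝ :=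
  deriv (deriv f) x + 1 / x * deriv f x - f x / x ^ 2

/-- The coefficient `A(x)` in the variation-of-constants representation
`f(x) = A(x) x + B(x)/x`, `f'(x) = A(x) - B(x)/x²` relative to the kernel of `radialOp`. -/
def coeffId (f : ℝ → ℝ) (x : ℝ) : ℝ := (deriv f x + f x / x) / 2

/-- The coefficient `B(x)` in the variation-of-constants representation
`f(x) = A(x) x + B(x)/x`, `f'(x) = A(x) - B(x)/x²` relative to the kernel of `radialOp`. -/
def coeffInv (f : ℝ → ℝ) (x : ℝ) : ℝ := x * (f x - x * deriv f x) / 2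

lemma coeffId_mul_add_coeffInv_div (f : ℝ → ℝ) (hx : x ≠ 0) :
    coeffId f x * x + coeffInv f x / x = f x := by
  unfold coeffId coeffInv
  field_simp
  ring

lemma hasDerivAt_coeffId (hx : x ≠ 0) (hf : DifferentiableAt ℝ f x)
    (hf' : DifferentiableAt ℝ (deriv f) x) : HasDerivAt (coeffId f) (radialOp f x / 2) x := by
  refine ((hf'.hasDerivAt.add (hf.hasDerivAt.div (hasDerivAt_id x) hx)).div_const 2).congr_deriv ?_
  simp only [radialOp, id]
  field_simp
  ring

lemma hasDerivAt_coeffInv (hx : x ≠ 0) (hf : DifferentiableAt ℝ f x)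
    (hf' : DifferentiableAt ℝ (deriv f) x) :
    HasDerivAt (coeffInv f) (-(x ^ 2 * radialOp f x / 2)) x := by
  have hid := hasDerivAt_id x
  refine ((hid.mul (hf.hasDerivAt.sub (hid.mul hf'.hasDerivAt))).div_const 2).congr_deriv ?_
  simp only [radialOp, id, Pi.sub_apply, Pi.mul_apply]
  field_simp
  ring

lemma abs_sub_coeffId_mul_le {a c δ : ℝ} (ha : 0 < a) (hc : 0 < c)
    (hf : ∀ x ∈ uIcc a c, DifferentiableAt ℝ f x)
    (hf' : ∀ x ∈ uIcc a c, DifferentiableAt ℝ (deriv f) x)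
    (hδ : ∀ x ∈ uIcc a c, |radialOp f x| ≤ δ) :
    |c * f c - a * f a - coeffId f a * (c ^ 2 - a ^ 2)| ≤ |c ^ 2 - a ^ 2| * δ / 2 * |c - a| := by
  have hpos : ∀ x ∈ uIcc a c, 0 < x := fun x hx => (lt_min ha hc).trans_le hx.1
  -- Freezing `c`, the function `x ↦ A(x) c² + B(x)` takes the value `c f(c)` at `x = c`.
  have hderiv : ∀ x ∈ uIcc a c, HasDerivWithinAt (fun x => coeffId f x * c ^ 2 + coeffInv f x)
      ((c ^ 2 - x ^ 2) * radialOp f x / 2) (uIcc a c) x := fun x hx =>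
    (((hasDerivAt_coeffId (hpos x hx).ne' (hf x hx) (hf' x hx)).mul_const (c ^ 2)).add
      (hasDerivAt_coeffInv (hpos x hx).ne' (hf x hx) (hf' x hx))).hasDerivWithinAt.congr_deriv
      (by ring)
  have hsq : ∀ x ∈ uIcc a c, |c ^ 2 - x ^ 2| ≤ |c ^ 2 - a ^ 2| := fun x hx =>
    abs_sub_right_of_mem_uIcc <| MonotoneOn.mapsTo_uIcc (f := fun x : ℝ => x ^ 2)
      (fun y hy z _ hyz => pow_le_pow_left₀ (hpos y hy).le hyz 2) hx
  have hbound : ∀ x ∈ uIcc a c,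
      ‖(c ^ 2 - x ^ 2) * radialOp f x / 2‖ ≤ |c ^ 2 - a ^ 2| * δ / 2 := fun x hx => by
    rw [norm_div, norm_mul, Real.norm_two]
    gcongr
    exacts [hsq x hx, hδ x hx]
  have hmvt := (convex_uIcc a c).norm_image_sub_le_of_norm_hasDerivWithin_le hderiv hbound
    left_mem_uIcc right_mem_uIcc
  refine (congrArg norm ?_).trans_le hmvt
  have hfa := coeffId_mul_add_coeffInv_div f ha.ne'
  have hfc := coeffId_mul_add_coeffInv_div f hc.ne'
  field_simp at hfa hfc
  linear_combination hfa - hfc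

lemma tendsto_sub_coeffId_mul {ι : Type*} {l : Filter ι} {F : ι → ℝ → ℝ} {p q a c : ℝ}
    (hp : 0 ≤ p) (hF : ∀ i, ∀ x ∈ Ioo p q, DifferentiableAt ℝ (F i) x)
    (hF' : ∀ i, ∀ x ∈ Ioo p q, DifferentiableAt ℝ (deriv (F i)) x)
    (hR : TendstoLocallyUniformlyOn (fun i => radialOp (F i)) 0 l (Ioo p q))
    (ha : a ∈ Ioo p q) (hc : c ∈ Ioo p q) :
    Tendsto (fun i => c * F i c - a * F i a - coeffId (F i) a * (c ^ 2 - a ^ 2)) l (𝓝 0) := by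
  have hsub : uIcc a c ⊆ Ioo p q := ordConnected_Ioo.uIcc_subset ha hc
  have hunif := (tendstoLocallyUniformlyOn_iff_forall_isCompact isOpen_Ioo).1 hR _ hsub
    isCompact_uIcc
  rw [Metric.tendstoUniformlyOn_iff] at hunif
  rw [Metric.tendsto_nhds]
  intro η hη
  obtain ⟨δ, hδ, hδη⟩ := exists_pos_mul_lt hη (|c ^ 2 - a ^ 2| / 2 * |c - a|)
  filter_upwards [hunif δ hδ] with i hi
  have hle := abs_sub_coeffId_mul_le (hp.trans_lt ha.1) (hp.trans_lt hc.1)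
    (fun x hx => hF i x (hsub hx)) (fun x hx => hF' i x (hsub hx))
    (fun x hx => by simpa using (hi x hx).le)
  rw [Real.dist_eq, sub_zero]
  linarith

/-- A pointwise limit of approximate solutions lies in the kernel of `radialOp`, without any
convergence of derivatives being assumed. -/
lemma exists_eq_add_div_of_tendsto_radialOp {ι : Type*} {l : Filter ι} [l.NeBot] {F : ι → ℝ → ℝ}
    {p q : ℝ} (hp : 0 ≤ p) (hF : ∀ i, ∀ x ∈ Ioo p q, DifferentiableAt ℝ (F i) x)
    (hF' : ∀ i, ∀ x ∈ Ioo p q, DifferentiableAt ℝ (deriv (F i)) x)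
    (hR : TendstoLocallyUniformlyOn (fun i => radialOp (F i)) 0 l (Ioo p q))
    (hlim : ∀ x ∈ Ioo p q, Tendsto (fun i => F i x) l (𝓝 (f x))) :
    ∃ A B : ℝ, ∀ x ∈ Ioo p q, f x = A * x + B / x := by
  rcases le_or_gt q p with hqp | hpq
  · exact ⟨0, 0, fun x hx => absurd (hx.1.trans hx.2) hqp.not_gt⟩
  obtain ⟨a, ha⟩ := nonempty_Ioo.2 hpq
  obtain ⟨b, hb⟩ := nonempty_Ioo.2 ha.2
  have hbpq : b ∈ Ioo p q := ⟨ha.1.trans hb.1, hb.2⟩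
  have ha0 : 0 < a := hp.trans_lt ha.1
  have hcoeff_mul : ∀ c ∈ Ioo p q, Tendsto (fun i => coeffId (F i) a * (c ^ 2 - a ^ 2)) l
      (𝓝 (c * f c - a * f a)) := fun c hc => by
    have := (((hlim c hc).const_mul c).sub ((hlim a ha).const_mul a)).sub
      (tendsto_sub_coeffId_mul hp hF hF' hR ha hc)
    simpa only [sub_sub_cancel, sub_zero] using this
  -- A second base point `b ≠ a` forces the coefficients themselves to converge.
  have hba : b ^ 2 - a ^ 2 ≠ 0 := (sub_pos.2 (pow_lt_pow_left₀ hb.1 ha0.le two_ne_zero)).ne'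
  set A := (b * f b - a * f a) / (b ^ 2 - a ^ 2)
  have hcoeff : Tendsto (fun i => coeffId (F i) a) l (𝓝 A) :=
    ((hcoeff_mul b hbpq).div_const (b ^ 2 - a ^ 2)).congr fun i => mul_div_cancel_right₀ _ hba
  refine ⟨A, a * f a - A * a ^ 2, fun c hc => ?_⟩
  have hc0 : c ≠ 0 := (hp.trans_lt hc.1).ne'
  have heq := tendsto_nhds_unique (hcoeff_mul c hc) (hcoeff.mul_const _)
  field_simp
  linear_combination heq

lemma deriv_mul_add_div (A B : ℝ) (hx : x ≠ 0) :
    deriv (fun y => A * y + B / y) x = A - B / x ^ 2 := by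
  refine (((hasDerivAt_id x).const_mul A).add
    ((hasDerivAt_const x B).div (hasDerivAt_id x) hx)).deriv.trans ?_
  simp only [id]
  ring

lemma coeffId_of_eventuallyEq {A B : ℝ} (hx : x ≠ 0) (h : f =ᶠ[𝓝 x] fun y => A * y + B / y) :
    coeffId f x = A := by
  rw [coeffId, h.deriv_eq, h.eq_of_nhds, deriv_mul_add_div A B hx]
  field_simp
  ring

lemma coeffInv_of_eventuallyEq {A B : ℝ} (hx : x ≠ 0) (h : f =ᶠ[𝓝 x] fun y => A * y + B / y) :
    coeffInv f x = B := by
  rw [coeffInv, h.deriv_eq, h.eq_of_nhds, deriv_mul_add_div A B hx]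
  field_simp
  ring

lemma eq_left_of_locally_const_off_countable {u : ℝ → ℝ} {p q : ℝ} {s : Set ℝ} (hs : s.Countable)
    (hu : ContinuousOn u (Icc p q))
    (hloc : ∀ y ∈ Ioo p q \ s, ∃ A, u =ᶠ[𝓝 y] fun _ => A) (hx : x ∈ Icc p q) : u x = u p := by
  have hderiv : ∀ y ∈ Ioo p x \ s, HasDerivAt u 0 y := fun y hy => by
    obtain ⟨A, hA⟩ := hloc y ⟨⟨hy.1.1, hy.1.2.trans_le hx.2⟩, hy.2⟩
    exact (hasDerivAt_const y A).congr_of_eventuallyEq hA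
  have hint := integral_eq_of_hasDerivAt_off_countable_of_le u (fun _ => 0) hx.1 hs
    (hu.mono (Icc_subset_Icc_right hx.2)) hderiv intervalIntegrable_const
  rw [intervalIntegral.integral_zero] at hint
  exact sub_eq_zero.1 hint.symm

lemma exists_eq_add_div_of_off_countable {p q : ℝ} {s : Set ℝ} (hp : 0 < p) (hs : s.Countable)
    (hf : ContinuousOn f (Icc p q)) (hf' : ContinuousOn (deriv f) (Icc p q))
    (hloc : ∀ x ∈ Ioo p q \ s, ∃ A B : ℝ, f =ᶠ[𝓝 x] fun y => A * y + B / y) :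
    ∃ A B : ℝ, ∀ x ∈ Icc p q, f x = A * x + B / x := by
  have hne : ∀ x ∈ Icc p q, x ≠ 0 := fun x hx => (hp.trans_le hx.1).ne'
  have hev : ∀ x ∈ Ioo p q, ∀ᶠ y in 𝓝 x, y ≠ 0 := fun x hx =>
    eventually_ne_nhds (hp.trans hx.1).ne'
  have hA : ∀ x ∈ Icc p q, coeffId f x = coeffId f p := fun x hx =>
    eq_left_of_locally_const_off_countable hs ((hf'.add (hf.div continuousOn_id hne)).div_const 2)
      (fun y hy => by
        obtain ⟨A, B, h⟩ := hloc y hy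
        refine ⟨A, ?_⟩
        filter_upwards [h.eventuallyEq_nhds, hev y hy.1] with z hz hz0
        exact coeffId_of_eventuallyEq hz0 hz) hx
  have hB : ∀ x ∈ Icc p q, coeffInv f x = coeffInv f p := fun x hx =>
    eq_left_of_locally_const_off_countable hs
      ((continuousOn_id.mul (hf.sub (continuousOn_id.mul hf'))).div_const 2)
      (fun y hy => by
        obtain ⟨A, B, h⟩ := hloc y hy
        refine ⟨B, ?_⟩
        filter_upwards [h.eventuallyEq_nhds, hev y hy.1] with z hz hz0
        exact coeffInv_of_eventuallyEq hz0 hz) hx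
  refine ⟨coeffId f p, coeffInv f p, fun x hx => ?_⟩
  rw [← hA x hx, ← hB x hx, coeffId_mul_add_coeffInv_div f (hne x hx)]

lemma mul_add_div_coeffs_eq_zero {A B p q : ℝ} (hp : 0 < p) (hpq : p < q)
    (h₁ : A * p + B / p = 0) (h₂ : A * q + B / q = 0) : A = 0 ∧ B = 0 := by
  have hq : 0 < q := hp.trans hpq
  field_simp at h₁ h₂
  have hA : A * (q ^ 2 - p ^ 2) = 0 := by linear_combination h₂ - h₁
  have hA0 : A = 0 := (mul_eq_zero.1 hA).resolve_right
    (sub_pos.2 (pow_lt_pow_left₀ hpq hp.le two_ne_zero)).ne'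
  exact ⟨hA0, by simpa [hA0] using h₁⟩

end RadialOperator

section PartialDerivatives

variable {F : ℝ × ℝ → ℝ} {U : Set (ℝ × ℝ)} {x : ℝ × ℝ} {k n : WithTop ℕ∞}

lemma hasDerivAt_pdr (hF : DifferentiableAt ℝ F x) :
    HasDerivAt (fun r => F (r, x.2)) (pdr F x) x.1 :=
  (hF.comp x.1 (differentiableAt_id.prodMk (differentiableAt_const x.2))).hasDerivAt

lemma hasDerivAt_pdz (hF : DifferentiableAt ℝ F x) :
    HasDerivAt (fun z => F (x.1, z)) (pdz F x) x.2 :=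
  (hF.comp x.2 ((differentiableAt_const x.1).prodMk differentiableAt_id)).hasDerivAt

lemma pdr_eq_fderiv (hF : DifferentiableAt ℝ F x) : pdr F x = fderiv ℝ F x (1, 0) :=
  (hF.hasFDerivAt.comp_hasDerivAt x.1
    ((hasDerivAt_id x.1).prodMk (hasDerivAt_const x.1 x.2))).deriv

lemma pdz_eq_fderiv (hF : DifferentiableAt ℝ F x) : pdz F x = fderiv ℝ F x (0, 1) :=
  (hF.hasFDerivAt.comp_hasDerivAt x.2
    ((hasDerivAt_const x.2 x.1).prodMk (hasDerivAt_id x.2))).deriv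

lemma pdz_sub {G : ℝ × ℝ → ℝ} (hF : DifferentiableAt ℝ F x) (hG : DifferentiableAt ℝ G x) :
    pdz (F - G) x = pdz F x - pdz G x :=
  ((hasDerivAt_pdz hF).sub (hasDerivAt_pdz hG)).deriv

lemma contDiffOn_pdr (hU : IsOpen U) (hF : ContDiffOn ℝ n F U) (hkn : k + 1 ≤ n) :
    ContDiffOn ℝ k (pdr F) U :=
  ((hF.fderiv_of_isOpen hU hkn).clm_apply contDiffOn_const).congr fun _ hx =>
    pdr_eq_fderiv <| (hF.of_le hkn).differentiableOn (by simp) |>.differentiableAt (hU.mem_nhds hx)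

lemma contDiffOn_pdz (hU : IsOpen U) (hF : ContDiffOn ℝ n F U) (hkn : k + 1 ≤ n) :
    ContDiffOn ℝ k (pdz F) U :=
  ((hF.fderiv_of_isOpen hU hkn).clm_apply contDiffOn_const).congr fun _ hx =>
    pdz_eq_fderiv <| (hF.of_le hkn).differentiableOn (by simp) |>.differentiableAt (hU.mem_nhds hx)

end PartialDerivatives

section LineIntegral

variable {F v ψ : ℝ × ℝ → ℝ} {s t : Set ℝ} {a b r : ℝ}

lemma intervalIntegrable_vertical_slice (hF : ContinuousOn F (s ×ˢ t)) (hab : uIcc a b ⊆ t)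
    (hr : r ∈ s) : IntervalIntegrable (fun z => F (r, z)) volume a b :=
  (hF.comp (by fun_prop) fun _ hz => ⟨hr, hab hz⟩).intervalIntegrable

lemma hasDerivAt_intervalIntegral_pdr (hs : IsOpen s) (ht : IsOpen t)
    (hF : ContDiffOn ℝ 1 F (s ×ˢ t)) (hab : uIcc a b ⊆ t) (hr : r ∈ s) :
    HasDerivAt (fun r => ∫ z in a..b, F (r, z)) (∫ z in a..b, pdr F (r, z)) r := by
  obtain ⟨K, hK, hrK, hKs⟩ := exists_compact_subset hs hr
  have hcont : ContinuousOn (pdr F) (s ×ˢ t) :=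
    (contDiffOn_pdr (hs.prod ht) hF (k := 0) (by simp)).continuousOn
  obtain ⟨C, hC⟩ := (hK.prod isCompact_uIcc).exists_bound_of_continuousOn
    (hcont.mono (prod_mono hKs hab))
  have hint : ∀ r ∈ s, IntervalIntegrable (fun z => F (r, z)) volume a b := fun r hr =>
    intervalIntegrable_vertical_slice hF.continuousOn hab hr
  have hint' := intervalIntegrable_vertical_slice hcont hab hr
  refine (intervalIntegral.hasDerivAt_integral_of_dominated_loc_of_deriv_le
    (F' := fun r z => pdr F (r, z)) (bound := fun _ => C) (mem_interior_iff_mem_nhds.1 hrK)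
    ?_ (hint r hr) hint'.def'.aestronglyMeasurable
    (ae_of_all _ fun z hz r' hr' => hC (r', z) ⟨hr', uIoc_subset_uIcc hz⟩) intervalIntegrable_const
    (ae_of_all _ fun z hz r' hr' => ?_)).2
  · filter_upwards [hs.mem_nhds hr] with r' hr'
    exact (hint r' hr').def'.aestronglyMeasurable
  · exact hasDerivAt_pdr (x := (r', z)) <| (hF.differentiableOn one_ne_zero).differentiableAt
      ((hs.prod ht).mem_nhds ⟨hKs hr', hab (uIoc_subset_uIcc hz)⟩)

lemma hasDerivAt_deriv_intervalIntegral (hs : IsOpen s) (ht : IsOpen t)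
    (hv : ContDiffOn ℝ 2 v (s ×ˢ t)) (hab : uIcc a b ⊆ t) (hr : r ∈ s) :
    HasDerivAt (deriv fun r => ∫ z in a..b, v (r, z)) (∫ z in a..b, pdr (pdr v) (r, z)) r := by
  have hvr : ContDiffOn ℝ 1 (pdr v) (s ×ˢ t) :=
    contDiffOn_pdr (hs.prod ht) hv one_add_one_eq_two.le
  refine (hasDerivAt_intervalIntegral_pdr hs ht hvr hab hr).congr_of_eventuallyEq ?_
  filter_upwards [hs.mem_nhds hr] with r' hr'
  exact (hasDerivAt_intervalIntegral_pdr hs ht (hv.of_le one_le_two) hab hr').deriv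

lemma radialOp_intervalIntegral (hs : IsOpen s) (ht : IsOpen t)
    (hv : ContDiffOn ℝ 2 v (s ×ˢ t)) (hab : uIcc a b ⊆ t) (hr : r ∈ s) :
    radialOp (fun r => ∫ z in a..b, v (r, z)) r =
      ∫ z in a..b, radialOp (fun r => v (r, z)) r := by
  have hU := hs.prod ht
  have hvr : ContDiffOn ℝ 1 (pdr v) (s ×ˢ t) := contDiffOn_pdr hU hv one_add_one_eq_two.le
  have hvrr : ContDiffOn ℝ 0 (pdr (pdr v)) (s ×ˢ t) := contDiffOn_pdr hU hvr (by simp)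
  have hi₀ := intervalIntegrable_vertical_slice hv.continuousOn hab hr
  have hi₁ := intervalIntegrable_vertical_slice hvr.continuousOn hab hr
  have hi₂ := intervalIntegrable_vertical_slice hvrr.continuousOn hab hr
  rw [radialOp, (hasDerivAt_deriv_intervalIntegral hs ht hv hab hr).deriv,
    (hasDerivAt_intervalIntegral_pdr hs ht (hv.of_le one_le_two) hab hr).deriv,
    ← intervalIntegral.integral_const_mul, ← intervalIntegral.integral_div,
    ← intervalIntegral.integral_add hi₂ (hi₁.const_mul _),
    ← intervalIntegral.integral_sub (hi₂.add (hi₁.const_mul _)) (hi₀.div_const _)]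
  rfl

lemma intervalIntegral_pdz (hs : IsOpen s) (ht : IsOpen t) (hψ : ContDiffOn ℝ 1 ψ (s ×ˢ t))
    (hab : uIcc a b ⊆ t) (hr : r ∈ s) : ∫ z in a..b, pdz ψ (r, z) = ψ (r, b) - ψ (r, a) := by
  have hU := hs.prod ht
  have hcont : ContinuousOn (pdz ψ) (s ×ˢ t) :=
    (contDiffOn_pdz hU hψ (k := 0) (by simp)).continuousOn
  exact intervalIntegral.integral_eq_sub_of_hasDerivAt (f := fun z => ψ (r, z))
    (fun z hz => hasDerivAt_pdz (x := (r, z)) <| (hψ.differentiableOn one_ne_zero).differentiableAt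
      (hU.mem_nhds ⟨hr, hab hz⟩))
    (intervalIntegrable_vertical_slice hcont hab hr)

lemma tendsto_intervalIntegral_of_tendsto_endpoints {ι : Type*} {l : Filter ι} {f : ℝ → ℝ}
    {u w : ι → ℝ} (hf : IntervalIntegrable f volume a b) (hu : Tendsto u l (𝓝[uIcc a b] a))
    (hw : Tendsto w l (𝓝[uIcc a b] b)) :
    Tendsto (fun i => ∫ z in u i..w i, f z) l (𝓝 (∫ z in a..b, f z)) := by
  have hprim := intervalIntegral.continuousOn_primitive_interval' hf left_mem_uIcc
  have hlim := ((hprim b right_mem_uIcc).tendsto.comp hw).sub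
    ((hprim a left_mem_uIcc).tendsto.comp hu)
  rw [intervalIntegral.integral_same, sub_zero] at hlim
  refine hlim.congr' ?_
  filter_upwards [tendsto_nhdsWithin_iff.1 hu |>.2, tendsto_nhdsWithin_iff.1 hw |>.2] with i hui hwi
  have hint : ∀ y ∈ uIcc a b, IntervalIntegrable f volume a y := fun y hy =>
    hf.mono_set (uIcc_subset_uIcc_left hy)
  exact intervalIntegral.integral_interval_sub_left (hint _ hwi) (hint _ hui)

lemma tendstoLocallyUniformlyOn_horizontal_slice {ι : Type*} {l : Filter ι} {u : ι → ℝ} {c : ℝ}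
    (hψ : ContinuousOn ψ (s ×ˢ t)) (hc : c ∈ t) (hu : Tendsto u l (𝓝[t] c))
    (hψc : ∀ r ∈ s, ψ (r, c) = 0) :
    TendstoLocallyUniformlyOn (fun i r => ψ (r, u i)) 0 l s := by
  refine tendstoLocallyUniformlyOn_iff_filter.2 fun r hr => tendsto_prod_filter_iff.1 ?_
  have h := (hψ (r, c) ⟨hr, hc⟩).tendsto
  rw [nhdsWithin_prod_eq, hψc r hr] at h
  exact h.comp (tendsto_snd.prodMk (hu.comp tendsto_fst))

/-- Integrating the equation over `[u n, w n] ⊆ (a, b)` leaves the flux difference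
`ψ(r, w n) - ψ(r, u n)`, which tends to zero locally uniformly in `r` as the segment exhausts
`(a, b)`. -/
lemma exists_lineIntegral_eq_add_div {p q : ℝ} (hp : 0 ≤ p) (hab : a < b)
    (hv : ContDiffOn ℝ 2 v (Ioo p q ×ˢ Ioo a b)) (hψ : ContDiffOn ℝ 1 ψ (Ioo p q ×ˢ Ioo a b))
    (heq : ∀ x ∈ Ioo p q ×ˢ Ioo a b, radialOp (fun r => v (r, x.2)) x.1 = pdz ψ x)
    (hvc : ContinuousOn v (Ioo p q ×ˢ Icc a b)) (hψc : ContinuousOn ψ (Ioo p q ×ˢ Icc a b))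
    (hψa : ∀ r ∈ Ioo p q, ψ (r, a) = 0) (hψb : ∀ r ∈ Ioo p q, ψ (r, b) = 0) :
    ∃ A B : ℝ, ∀ r ∈ Ioo p q, ∫ z in a..b, v (r, z) = A * r + B / r := by
  have hexhaust : ∀ c ∈ Icc a b,
      ∃ u : ℕ → ℝ, (∀ n, u n ∈ Ioo a b) ∧ Tendsto u atTop (𝓝[Icc a b] c) := fun c hc => by
    obtain ⟨u, hu, hlim⟩ := mem_closure_iff_seq_limit.1 ((closure_Ioo hab.ne).symm ▸ hc)
    exact ⟨u, hu, tendsto_nhdsWithin_iff.2 ⟨hlim, .of_forall fun n => Ioo_subset_Icc_self (hu n)⟩⟩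
  have ha : a ∈ Icc a b := left_mem_Icc.2 hab.le
  have hb : b ∈ Icc a b := right_mem_Icc.2 hab.le
  obtain ⟨u, hu, hua⟩ := hexhaust a ha
  obtain ⟨w, hw, hwb⟩ := hexhaust b hb
  have huw : ∀ n, uIcc (u n) (w n) ⊆ Ioo a b := fun n =>
    ordConnected_Ioo.uIcc_subset (hu n) (hw n)
  have hradial : ∀ n, ∀ r ∈ Ioo p q,
      ψ (r, w n) - ψ (r, u n) = radialOp (fun r => ∫ z in u n..w n, v (r, z)) r := fun n r hr => by
    rw [radialOp_intervalIntegral isOpen_Ioo isOpen_Ioo hv (huw n) hr,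
      ← intervalIntegral_pdz isOpen_Ioo isOpen_Ioo hψ (huw n) hr]
    exact intervalIntegral.integral_congr fun z hz => (heq (r, z) ⟨hr, huw n hz⟩).symm
  have hflux := (tendstoLocallyUniformlyOn_horizontal_slice hψc hb hwb hψb).sub
    (tendstoLocallyUniformlyOn_horizontal_slice hψc ha hua hψa)
  refine exists_eq_add_div_of_tendsto_radialOp (l := atTop)
    (F := fun n r => ∫ z in u n..w n, v (r, z)) hp
    (fun n r hr => (hasDerivAt_intervalIntegral_pdr isOpen_Ioo isOpen_Ioo (hv.of_le one_le_two)
      (huw n) hr).differentiableAt)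
    (fun n r hr => (hasDerivAt_deriv_intervalIntegral isOpen_Ioo isOpen_Ioo hv
      (huw n) hr).differentiableAt)
    (by simpa only [sub_zero] using hflux.congr hradial) fun r hr => ?_
  rw [← uIcc_of_le hab.le] at hua hwb hvc
  exact tendsto_intervalIntegral_of_tendsto_endpoints
    (intervalIntegrable_vertical_slice hvc Subset.rfl hr) hua hwb

end LineIntegral

section Domain

variable {β : ℝ} {m j : ℕ} {c z : ℝ}

lemma rW_eq_pow (j : ℕ) : rW j = (1 / 2) ^ j := by
  rw [rW, Real.rpow_neg two_pos.le, Real.rpow_natCast, one_div, inv_pow]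

lemma rW_pos (j : ℕ) : 0 < rW j := Real.rpow_pos_of_pos two_pos _

lemma hH_pos (β : ℝ) (j : ℕ) : 0 < hH β j := Real.rpow_pos_of_pos two_pos _

lemma rW_zero : rW 0 = 1 := by rw [rW_eq_pow, pow_zero]

lemma rW_strictAnti : StrictAnti rW := by
  simpa only [← funext rW_eq_pow] using
    pow_right_strictAnti₀ (a := (1 / 2 : ℝ)) (by norm_num) (by norm_num)

lemma rW_le_one (j : ℕ) : rW j ≤ 1 := rW_zero ▸ rW_strictAnti.antitone j.zero_le

lemma exists_mem_Ioo_rW (hc : c ∈ Ioo (rW m) 1) (hrange : c ∉ range rW) :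
    ∃ j ∈ Finset.Icc 1 m, c ∈ Ioo (rW j) (rW (j - 1)) := by
  obtain ⟨n, hlt, hle⟩ := exists_nat_pow_near_of_lt_one ((rW_pos m).trans hc.1) hc.2.le
    (one_half_pos (α := ℝ)) one_half_lt_one
  rw [← rW_eq_pow] at hlt hle
  have hnm : n < m := rW_strictAnti.lt_iff_gt.1 (hc.1.trans_le hle)
  exact ⟨n + 1, Finset.mem_Icc.2 ⟨n.succ_pos, hnm⟩, hlt,
    hle.lt_of_ne fun h => hrange ⟨n, h.symm⟩⟩

lemma ne_rW_of_mem_Ioo (hc : c ∈ Ioo (rW j) (rW (j - 1))) (i : ℕ) : c ≠ rW i := by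
  rintro rfl
  have hij := rW_strictAnti.lt_iff_gt.1 hc.1
  have hji := rW_strictAnti.lt_iff_gt.1 hc.2
  omega

lemma mem_Ddom {x : ℝ × ℝ} : x ∈ Ddom β m ↔ ∃ j ∈ Finset.Icc 1 m, x ∈ Srect β j := by
  simp only [Ddom, mem_iUnion, exists_prop]

lemma vertSeg_eq_Ioo (hj : j ∈ Finset.Icc 1 m) (hc : c ∈ Ico (rW j) (rW (j - 1))) :
    vertSeg β m c = Ioo 0 (hH β j) := by
  ext z
  refine ⟨fun hz => ?_, fun hz => mem_Ddom.2 ⟨j, hj, hc.1, hc.2, hz⟩⟩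
  obtain ⟨i, hi, hic, hci, hz⟩ := mem_Ddom.1 hz
  have hij := rW_strictAnti.lt_iff_gt.1 (hc.1.trans_lt hci)
  have hji := rW_strictAnti.lt_iff_gt.1 (hic.trans_lt hc.2)
  obtain rfl : i = j := by
    rw [Finset.mem_Icc] at hi hj
    omega
  exact hz

lemma vertSeg_one : vertSeg β m 1 = ∅ :=
  eq_empty_of_forall_notMem fun _ hz =>
    have ⟨j, _, _, hlt, _⟩ := mem_Ddom.1 hz
    (rW_le_one (j - 1)).not_gt hlt

lemma notMem_cornerSet_of_forall_ne_rW (hc : ∀ i, c ≠ rW i) : (c, z) ∉ cornerSet β m := by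
  have hc1 : c ≠ 1 := rW_zero ▸ hc 0
  simp [cornerSet, hc, hc1]

lemma notMem_cornerSet_inner_wall (hm : 1 ≤ m) (hz : z ∈ Ioo 0 (hH β m)) :
    (rW m, z) ∉ cornerSet β m := by
  have hne : ∀ i < m, rW m ≠ rW i := fun i hi => (rW_strictAnti hi).ne
  have h1 : rW m ≠ 1 := rW_zero ▸ hne 0 hm
  simp only [cornerSet, mem_union, mem_insert_iff, mem_singleton_iff, mem_iUnion, Prod.mk.injEq,
    Finset.mem_Icc, h1, hz.1.ne', hz.2.ne, and_false, false_and, or_false, false_or, not_exists]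
  rintro i hi (⟨h, -⟩ | ⟨h, -⟩) <;> exact hne i (by omega) h

lemma strip_subset_Srect (β : ℝ) (j : ℕ) :
    Ioo (rW j) (rW (j - 1)) ×ˢ Ioo 0 (hH β j) ⊆ Srect β j :=
  fun _ hx => ⟨hx.1.1.le, hx.1.2, hx.2⟩

lemma Srect_subset_Ddom (hj : j ∈ Finset.Icc 1 m) : Srect β j ⊆ Ddom β m :=
  fun _ hx => mem_Ddom.2 ⟨j, hj, hx⟩

lemma strip_subset_interior_Ddom (hj : j ∈ Finset.Icc 1 m) :
    Ioo (rW j) (rW (j - 1)) ×ˢ Ioo 0 (hH β j) ⊆ interior (Ddom β m) :=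
  interior_maximal ((strip_subset_Srect β j).trans (Srect_subset_Ddom hj))
    (isOpen_Ioo.prod isOpen_Ioo)

lemma strip_subset_closure_Srect (β : ℝ) (j : ℕ) :
    Ioo (rW j) (rW (j - 1)) ×ˢ Icc 0 (hH β j) ⊆ closure (Srect β j) := by
  refine Subset.trans ?_ (closure_mono (strip_subset_Srect β j))
  rw [closure_prod_eq, closure_Ioo (hH_pos β j).ne]
  exact prod_mono subset_closure Subset.rfl

lemma bottom_mem_bdH (hj : j ∈ Finset.Icc 1 m) (hc : c ∈ Ioo (rW j) (rW (j - 1))) :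
    (c, 0) ∈ bdH β m :=
  .inl ⟨rfl, (rW_strictAnti.antitone (Finset.mem_Icc.1 hj).2).trans hc.1.le,
    hc.2.le.trans (rW_le_one _)⟩

lemma top_mem_bdH (hj : j ∈ Finset.Icc 1 m) (hc : c ∈ Ioo (rW j) (rW (j - 1))) :
    (c, hH β j) ∈ bdH β m :=
  .inr (mem_biUnion hj ⟨rfl, hc.1.le, hc.2.le⟩)

lemma setIntegral_vertSeg_eq_add_div {v ω : ℝ × ℝ → ℝ} (hj : j ∈ Finset.Icc 1 m)
    (hv : ContDiffOn ℝ 2 v (interior (Ddom β m)))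
    (hω : ContDiffOn ℝ 1 ω (interior (Ddom β m)))
    (hωc : ContinuousOn ω (closure (Ddom β m)))
    (hω0 : ∀ p ∈ bdH β m, ω p = 0)
    (hvc : ContinuousOn v (closure (Srect β j) \ cornerSet β m))
    (hvz : ContinuousOn (pdz v) (closure (Srect β j) \ cornerSet β m))
    (hvH : ∀ p ∈ bdH β m \ cornerSet β m, pdz v p = 0)
    (heq : ∀ p ∈ interior (Ddom β m),
      pdr (pdr v) p + (1 / p.1) * pdr v p + pdz (pdz v) p - v p / p.1 ^ 2 = pdz ω p) :
    ∃ A B : ℝ, ∀ c ∈ Ioo (rW j) (rW (j - 1)),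
      ∫ z in vertSeg β m c, v (c, z) = A * c + B / c := by
  have hint : Ioo (rW j) (rW (j - 1)) ×ˢ Ioo 0 (hH β j) ⊆ interior (Ddom β m) :=
    strip_subset_interior_Ddom hj
  have hcorner : ∀ r ∈ Ioo (rW j) (rW (j - 1)), ∀ z, (r, z) ∉ cornerSet β m := fun r hr z =>
    notMem_cornerSet_of_forall_ne_rW (ne_rW_of_mem_Ioo hr)
  have hcl := strip_subset_closure_Srect β j
  have hcl' : Ioo (rW j) (rW (j - 1)) ×ˢ Icc 0 (hH β j) ⊆ closure (Srect β j) \ cornerSet β m :=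
    fun x hx => ⟨hcl hx, hcorner x.1 hx.1 x.2⟩
  have hvz₁ : ContDiffOn ℝ 1 (pdz v) (interior (Ddom β m)) :=
    contDiffOn_pdz isOpen_interior hv one_add_one_eq_two.le
  have hflux : ∀ x ∈ interior (Ddom β m),
      radialOp (fun r => v (r, x.2)) x.1 = pdz (ω - pdz v) x := fun x hx => by
    rw [pdz_sub ((hω.differentiableOn one_ne_zero).differentiableAt (isOpen_interior.mem_nhds hx))
      ((hvz₁.differentiableOn one_ne_zero).differentiableAt (isOpen_interior.mem_nhds hx)),
      ← heq x hx]
    change pdr (pdr v) x + 1 / x.1 * pdr v x - v x / x.1 ^ 2 = _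
    ring
  have hflux_zero : ∀ r ∈ Ioo (rW j) (rW (j - 1)), ∀ z, (r, z) ∈ bdH β m →
      (ω - pdz v) (r, z) = 0 := fun r hr z hz => by
    rw [Pi.sub_apply, hω0 _ hz, hvH _ ⟨hz, hcorner r hr z⟩, sub_zero]
  obtain ⟨A, B, hAB⟩ := exists_lineIntegral_eq_add_div (rW_pos j).le (hH_pos β j)
    (hv.mono hint) ((hω.sub hvz₁).mono hint) (fun x hx => hflux x (hint hx)) (hvc.mono hcl')
    ((hωc.mono (hcl.trans (closure_mono (Srect_subset_Ddom hj)))).sub (hvz.mono hcl'))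
    (fun r hr => hflux_zero r hr 0 (bottom_mem_bdH hj hr))
    (fun r hr => hflux_zero r hr _ (top_mem_bdH hj hr))
  refine ⟨A, B, fun c hc => ?_⟩
  rw [vertSeg_eq_Ioo hj (Ioo_subset_Ico_self hc), ← hAB c hc,
    intervalIntegral.integral_of_le (hH_pos β j).le, integral_Ioc_eq_integral_Ioo]

lemma setIntegral_vertSeg_inner_wall {v : ℝ × ℝ → ℝ} (hm : 1 ≤ m)
    (hvV : ∀ p ∈ bdV β m \ cornerSet β m, v p = 0) :
    ∫ z in vertSeg β m (rW m), v (rW m, z) = 0 := by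
  rw [vertSeg_eq_Ioo (Finset.mem_Icc.2 ⟨hm, le_rfl⟩)
    (left_mem_Ico.2 (rW_strictAnti (Nat.sub_one_lt_of_le hm le_rfl)))]
  exact setIntegral_eq_zero_of_forall_eq_zero fun z hz =>
    hvV _ ⟨.inl (.inr ⟨rfl, hz.1.le, hz.2.le⟩), notMem_cornerSet_inner_wall hm hz⟩

end Domain

theorem line_integral_vanishes_general (β : ℝ) (m : ℕ) (v ω : ℝ × ℝ → ℝ)
    (hv : ContDiffOn ℝ 2 v (interior (Ddom β m)))
    (hω : ContDiffOn ℝ 1 ω (interior (Ddom β m)))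
    (hωc : ContinuousOn ω (closure (Ddom β m)))
    (hω0 : ∀ p ∈ bdH β m, ω p = 0)
    (hvext : ∀ j ∈ Finset.Icc 1 m,
      ContinuousOn v (closure (Srect β j) \ cornerSet β m) ∧
      ContinuousOn (pdz v) (closure (Srect β j) \ cornerSet β m))
    (hvH : ∀ p ∈ bdH β m \ cornerSet β m, pdz v p = 0)
    (hvV : ∀ p ∈ bdV β m \ cornerSet β m, v p = 0)
    (heq : ∀ p ∈ interior (Ddom β m),
      pdr (pdr v) p + (1 / p.1) * pdr v p + pdz (pdz v) p - v p / p.1 ^ 2 = pdz ω p)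
    (hg : ContinuousOn (fun c => ∫ z in vertSeg β m c, v (c, z)) (Icc (rW m) 1))
    (hg' : ContinuousOn (deriv fun c => ∫ z in vertSeg β m c, v (c, z)) (Icc (rW m) 1)) :
    ∀ c ∈ Ioo (rW m) 1, (∫ z in vertSeg β m c, v (c, z)) = 0 := by
  intro c hc
  have hlt : rW m < 1 := hc.1.trans hc.2
  have hm : 1 ≤ m := Nat.one_le_iff_ne_zero.2 fun h => hlt.ne (h ▸ rW_zero)
  obtain ⟨A, B, hAB⟩ := exists_eq_add_div_of_off_countable (rW_pos m) (countable_range rW) hg hg'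
    fun r hr => by
      obtain ⟨j, hj, hrj⟩ := exists_mem_Ioo_rW hr.1 hr.2
      obtain ⟨A, B, h⟩ := setIntegral_vertSeg_eq_add_div hj hv hω hωc hω0 (hvext j hj).1
        (hvext j hj).2 hvH heq
      exact ⟨A, B, eventually_of_mem (isOpen_Ioo.mem_nhds hrj) h⟩
  -- `Ddom` excludes `r = 1`, so the segment there is empty.
  have hone : ∫ z in vertSeg β m 1, v (1, z) = 0 := by rw [vertSeg_one, setIntegral_empty]
  obtain ⟨rfl, rfl⟩ := mul_add_div_coeffs_eq_zero (rW_pos m) hlt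
    ((hAB _ (left_mem_Icc.2 hlt.le)).symm.trans (setIntegral_vertSeg_inner_wall hm hvV))
    ((hAB 1 (right_mem_Icc.2 hlt.le)).symm.trans hone)
  rw [hAB c (Ioo_subset_Icc_self hc), zero_mul, zero_div, add_zero]

/-- The vertical line integrals of the solution `v` of
`Δ v - v/r² = ∂_{x₃} ω` with the stated boundary conditions all vanish. -/
theorem line_integral_vanishes (β : ℝ) (hβ : 1 < β) (hβ' : β ≤ 1.1)
    (m : ℕ) (hm : 1 ≤ m) (v ω : ℝ × ℝ → ℝ)
    -- v and ω are smooth in the interior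
    (hv : ContDiffOn ℝ (⊤ : ℕ∞) v (Ddom β m))
    (hω : ContDiffOn ℝ (⊤ : ℕ∞) ω (Ddom β m))
    -- (ii) ω is continuous up to the boundary and vanishes there
    (hωc : ContinuousOn ω (closure (Ddom β m)))
    (hω0 : ∀ p ∈ bdD β m, ω p = 0)
    -- (iii) v, ∂_r v, ∂_{x₃} v extend continuously to the closure of each rectangle
    -- away from the corner points, with the stated boundary values
    (hvext : ∀ j ∈ Finset.Icc 1 m,
      ContinuousOn v (closure (Srect β j) \ cornerSet β m) ∧
      ContinuousOn (pdr v) (closure (Srect β j) \ cornerSet β m) ∧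
      ContinuousOn (pdz v) (closure (Srect β j) \ cornerSet β m))
    (hvH : ∀ p ∈ bdH β m \ cornerSet β m, pdz v p = 0)
    (hvV : ∀ p ∈ bdV β m \ cornerSet β m, v p = 0)
    -- (i) the equation
    (heq : ∀ p ∈ Ddom β m,
      pdr (pdr v) p + (1 / p.1) * pdr v p + pdz (pdz v) p - v p / p.1 ^ 2 = pdz ω p)
    -- (iv) continuity of g and g'
    (hg : ContinuousOn (fun c => ∫ z in vertSeg β m c, v (c, z)) (Set.Icc (rW m) 1))
    (hg' : ContinuousOn (deriv fun c => ∫ z in vertSeg β m c, v (c, z))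
      (Set.Icc (rW m) 1)) :
    ∀ c ∈ Set.Ioo (rW m) 1, (∫ z in vertSeg β m c, v (c, z)) = 0 :=
  line_integral_vanishes_general β m v ω
    ((contDiffOn_infty.1 hv 2).mono interior_subset)
    ((contDiffOn_infty.1 hω 1).mono interior_subset)
    hωc (fun p hp => hω0 p (.inl hp)) (fun j hj => ⟨(hvext j hj).1, (hvext j hj).2.2⟩) hvH hvV
    (fun p hp => heq p (interior_subset hp)) hg hg'
end
end

section
/- Let 0 < a < b and let a = ρ₀ < ρ₁ < ⋯ < ρ_k = b be a partition of [a, b]. Suppose g : [a, b] → ℝ is continuously differentiable on [a, b], twice continuously differentiable on each open subinterval (ρ_{i−1}, ρ_i), satisfies g″(r) + g′(r)/r − g(r)/r² = 0 for every r in each open subinterval (ρ_{i−1}, ρ_i), and g(a) = g(b) = 0. Then g ≡ 0 on [a, b]. -/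
noncomputable section

open Real Set

/-!
The Euler equation `g'' + g'/r - g/r² = 0` says that the first integral `g' + g/r` has derivative
zero. As `g` is `C¹`, it is continuous across the partition points, hence equal to a single
constant `c` on the whole interval. Then `(r g)' = r (g' + g/r) = c r` yields
`g = (c/2) r + d/r`, and such a function with two zeros `a ≠ b` of the same sign vanishes.
-/

theorem exists_mem_Ioo_succ_of_notMem_range {α : Type*} [LinearOrder α] {ρ : ℕ → α} {k : ℕ} {x : α}
    (h0 : ρ 0 ≤ x) (hk : x < ρ k) (hx : x ∉ range ρ) : ∃ i < k, x ∈ Ioo (ρ i) (ρ (i + 1)) := by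
  induction k with
  | zero => exact absurd hk h0.not_gt
  | succ k ih =>
    rcases lt_or_ge x (ρ k) with hlt | hge
    · obtain ⟨i, hi, hxi⟩ := ih hlt
      exact ⟨i, hi.trans k.lt_succ_self, hxi⟩
    · exact ⟨k, k.lt_succ_self, hge.lt_of_ne fun h => hx ⟨k, h⟩, hk⟩

theorem eq_zero_of_smul_add_inv_smul_eq_zero {K M : Type*} [Field K] [AddCommGroup M] [Module K M]
    {a b : K} (ha : a ≠ 0) (hb : b ≠ 0) (hab : a ^ 2 ≠ b ^ 2) {c d : M}
    (hca : a • c + a⁻¹ • d = 0) (hcb : b • c + b⁻¹ • d = 0) : c = 0 ∧ d = 0 := by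
  have clear_inv : ∀ r : K, r ≠ 0 → r • c + r⁻¹ • d = 0 → r ^ 2 • c + d = 0 := by
    intro r hr h
    simpa [smul_smul, hr, pow_two] using congrArg (r • ·) h
  have hda := clear_inv a ha hca
  have hdb := clear_inv b hb hcb
  have hsmul : (a ^ 2 - b ^ 2) • c = 0 := by
    rw [sub_smul, sub_eq_zero]
    exact add_right_cancel (hda.trans hdb.symm)
  have hc : c = 0 := (smul_eq_zero.1 hsmul).resolve_left (sub_ne_zero.2 hab)
  exact ⟨hc, by simpa [hc] using hda⟩

theorem sq_injOn_of_convex_of_zero_notMem {K : Type*} [Field K] [LinearOrder K]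
    [IsStrictOrderedRing K] {t : Set K} (ht : Convex K t) (h0 : 0 ∉ t) : InjOn (· ^ 2) t := by
  intro a ha b hb hab
  refine (sq_eq_sq_iff_eq_or_eq_neg.1 hab).resolve_right ?_
  rintro rfl
  exact h0 (by simpa [midpoint_eq_smul_add] using ht.midpoint_mem ha hb)

section NormedSpace

variable {E : Type*} [NormedAddCommGroup E] [NormedSpace ℝ E] {s t : Set ℝ}

theorem exists_eq_const_of_hasDerivAt_zero_off_countable {f : ℝ → E} (ht : Convex ℝ t)
    (hs : s.Countable) (hf : ContinuousOn f t) (hf' : ∀ x ∈ interior t \ s, HasDerivAt f 0 x) :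
    ∃ c, ∀ x ∈ t, f x = c := by
  rcases t.eq_empty_or_nonempty with rfl | ⟨a, ha⟩
  · exact ⟨0, by simp⟩
  refine ⟨f a, fun x hx => ?_⟩
  have hsub : uIcc a x ⊆ t := ht.ordConnected.uIcc_subset ha hx
  have hint : Ioo (min a x) (max a x) ⊆ interior t :=
    interior_maximal (Ioo_subset_Icc_self.trans hsub) isOpen_Ioo
  -- Testing against functionals avoids assuming `E` complete, as vector-valued integrals require.
  refine SeparatingDual.eq_iff_forall_dual_eq (R := ℝ) |>.2 fun φ => ?_
  have hφ := MeasureTheory.integral_eq_of_hasDerivAt_off_countable (φ ∘ f) 0 hs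
    (φ.continuous.comp_continuousOn (hf.mono hsub))
    (fun y hy => by
      simpa using φ.hasFDerivAt.comp_hasDerivAt y (hf' y ⟨hint hy.1, hy.2⟩))
    intervalIntegrable_const
  exact sub_eq_zero.1 (by simpa using hφ.symm)

/-- `g` solves the Euler equation `g'' + g'/r - g/r² = 0` at `r`. Solving for `g''` and using
`HasDerivAt` makes the existence of the second derivative at `r` part of the definition. -/
def SolvesEulerAt (g : ℝ → E) (r : ℝ) : Prop :=
  HasDerivAt (deriv g) ((r ^ 2)⁻¹ • g r - r⁻¹ • deriv g r) r

variable {g : ℝ → E}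

theorem SolvesEulerAt.hasDerivAt_deriv_add_inv_smul {r : ℝ} (hode : SolvesEulerAt g r)
    (hr : r ≠ 0) (hg : DifferentiableAt ℝ g r) :
    HasDerivAt (fun x => deriv g x + x⁻¹ • g x) 0 r := by
  refine (HasDerivAt.add hode ((hasDerivAt_inv hr).smul hg.hasDerivAt)).congr_deriv ?_
  module

theorem exists_deriv_add_inv_smul_eq_of_solvesEulerAt (ht : Convex ℝ t) (hto : IsOpen t)
    (h0 : 0 ∉ t) (hs : s.Countable) (hg : ContDiffOn ℝ 1 g t)
    (hode : ∀ r ∈ t \ s, SolvesEulerAt g r) : ∃ c, ∀ r ∈ t, deriv g r + r⁻¹ • g r = c := by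
  have hne : ∀ r ∈ t, r ≠ 0 := fun r hr => ne_of_mem_of_not_mem hr h0
  refine exists_eq_const_of_hasDerivAt_zero_off_countable ht hs
    ((hg.continuousOn_deriv_of_isOpen hto le_rfl).add
      ((continuousOn_id.inv₀ hne).smul hg.continuousOn)) fun r hr => ?_
  rw [hto.interior_eq] at hr
  exact (hode r hr).hasDerivAt_deriv_add_inv_smul (hne r hr.1)
    ((hg.contDiffAt (hto.mem_nhds hr.1)).differentiableAt one_ne_zero)

theorem exists_eq_smul_add_inv_smul_of_solvesEulerAt (ht : Convex ℝ t) (h0 : 0 ∉ t)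
    (hs : s.Countable) (hgc : ContinuousOn g t) (hg : ContDiffOn ℝ 1 g (interior t))
    (hode : ∀ r ∈ interior t \ s, SolvesEulerAt g r) :
    ∃ c d : E, ∀ r ∈ t, g r = r • c + r⁻¹ • d := by
  have hne : ∀ r ∈ t, r ≠ 0 := fun r hr => ne_of_mem_of_not_mem hr h0
  obtain ⟨c, hc⟩ := exists_deriv_add_inv_smul_eq_of_solvesEulerAt ht.interior isOpen_interior
    (fun h => h0 (interior_subset h)) hs hg hode
  have hderiv : ∀ r ∈ interior t \ ∅,
      HasDerivAt (fun x => x • g x - (x ^ 2 / 2) • c) 0 r := by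
    intro r hr
    have hr0 := hne r (interior_subset hr.1)
    have hgr := (hg.contDiffAt (isOpen_interior.mem_nhds hr.1)).differentiableAt one_ne_zero
    refine (((hasDerivAt_id r).smul hgr.hasDerivAt).sub
      (((hasDerivAt_pow 2 r).div_const 2).smul_const c)).congr_deriv ?_
    rw [← hc r hr.1]
    simp only [id]
    match_scalars <;> field_simp <;> norm_num
  obtain ⟨d, hd⟩ := exists_eq_const_of_hasDerivAt_zero_off_countable ht countable_empty
    (by fun_prop) hderiv
  refine ⟨(2⁻¹ : ℝ) • c, d, fun r hr => ?_⟩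
  have hr0 := hne r hr
  rw [← hd r hr]
  match_scalars <;> field_simp
  norm_num

theorem euler_ode_piecewise_zero_general (ht : Convex ℝ t) (h0 : 0 ∉ t) (hs : s.Countable)
    (hgc : ContinuousOn g t) (hg : ContDiffOn ℝ 1 g (interior t))
    (hode : ∀ r ∈ interior t \ s, SolvesEulerAt g r)
    {a b : ℝ} (ha : a ∈ t) (hb : b ∈ t) (hab : a ≠ b) (hga : g a = 0) (hgb : g b = 0) :
    ∀ r ∈ t, g r = 0 := by
  obtain ⟨c, d, hcd⟩ := exists_eq_smul_add_inv_smul_of_solvesEulerAt ht h0 hs hgc hg hode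
  obtain ⟨rfl, rfl⟩ := eq_zero_of_smul_add_inv_smul_eq_zero (ne_of_mem_of_not_mem ha h0)
    (ne_of_mem_of_not_mem hb h0) (fun h => hab (sq_injOn_of_convex_of_zero_notMem ht h0 ha hb h))
    (hcd a ha ▸ hga) (hcd b hb ▸ hgb)
  simpa using hcd

end NormedSpace

theorem solvesEulerAt_of_contDiffAt {g : ℝ → ℝ} {r : ℝ} (hg : ContDiffAt ℝ 2 g r)
    (heq : deriv (deriv g) r + deriv g r / r - g r / r ^ 2 = 0) : SolvesEulerAt g r := by
  have hg' : ContDiffAt ℝ 1 (deriv g) r := hg.derivWithin (by norm_num)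
  refine (hg'.differentiableAt one_ne_zero).hasDerivAt.congr_deriv ?_
  simp only [smul_eq_mul, ← div_eq_inv_mul]
  linarith

theorem solvesEulerAt_off_range_of_contDiffOn_Ioo {k : ℕ} {ρ : ℕ → ℝ} {g : ℝ → ℝ}
    (hg : ∀ i < k, ContDiffOn ℝ 2 g (Ioo (ρ i) (ρ (i + 1))))
    (heq : ∀ i < k, ∀ r ∈ Ioo (ρ i) (ρ (i + 1)),
      deriv (deriv g) r + deriv g r / r - g r / r ^ 2 = 0) :
    ∀ r ∈ Ioo (ρ 0) (ρ k) \ range ρ, SolvesEulerAt g r := by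
  rintro r ⟨hr, hrρ⟩
  obtain ⟨i, hi, hri⟩ := exists_mem_Ioo_succ_of_notMem_range hr.1.le hr.2 hrρ
  exact solvesEulerAt_of_contDiffAt ((hg i hi).contDiffAt (isOpen_Ioo.mem_nhds hri))
    (heq i hi r hri)

/-- A `C¹` function on `[a,b]`, piecewise `C²` and solving the Euler
equation `g'' + g'/r - g/r² = 0` on each subinterval of a partition, which vanishes at
both endpoints, vanishes identically. -/
theorem euler_ode_piecewise_zero (a b : ℝ) (ha : 0 < a) (hab : a < b)
    (k : ℕ) (hk : 0 < k) (ρ : ℕ → ℝ)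
    (hρ0 : ρ 0 = a) (hρk : ρ k = b)
    (hmono : ∀ i < k, ρ i < ρ (i + 1))
    (g : ℝ → ℝ)
    (hg1 : ContDiffOn ℝ 1 g (Set.Icc a b))
    (hg2 : ∀ i < k, ContDiffOn ℝ 2 g (Set.Ioo (ρ i) (ρ (i + 1))))
    (heq : ∀ i < k, ∀ r ∈ Set.Ioo (ρ i) (ρ (i + 1)),
      deriv (deriv g) r + deriv g r / r - g r / r ^ 2 = 0)
    (hga : g a = 0) (hgb : g b = 0) :
    ∀ r ∈ Set.Icc a b, g r = 0 := by
  subst hρ0 hρk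
  exact euler_ode_piecewise_zero_general (convex_Icc _ _) (fun h => ha.not_ge h.1)
    (countable_range ρ) hg1.continuousOn (hg1.mono interior_subset)
    (interior_Icc (a := ρ 0) ▸ solvesEulerAt_off_range_of_contDiffOn_Ioo hg2 heq)
    (left_mem_Icc.2 hab.le) (right_mem_Icc.2 hab.le) hab.ne hga hgb
end
end
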